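/- Let ℓ ∈ 𝕃, ν ∈ (0,1], and let {λ_t} be boosting iterates whose steps α_i are Wolfe steps, i.e. each α_i ≥ 0 satisfies both L(A(λ_{i−1}+α_i v_i)) ≤ L(Aλ_{i−1}) − α_i(1−ν/2)·‖Aᵀ∇L(Aλ_{i−1})‖_∞ and ∇L(A(λ_{i−1}+α_i v_i))ᵀA v_i ≥ −(1−ν/4)·‖Aᵀ∇L(Aλ_{i−1})‖_∞. Then for all integers t > t₀ ≥ 0: L(Aλ_t) ≤ L(Aλ_{t₀})·exp(−(ν(2−ν)/(8·C_{t₀+1}⁶))·Σ_{i=t₀+1}^{t} γ_i²). -/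

import Mathlib

open Real Finset

noncomputable section

/-- The property that `C` is a valid curvature constant at level `z`:
`C ≥ 1` and `C⁻¹ ≤ eˣ / ℓ⁽ⁱ⁾(x) ≤ C` for all `x ≤ z` and `i ∈ {0,1,2}`. -/
def CBound (ℓ : ℝ → ℝ) (z C : ℝ) : Prop :=
  1 ≤ C ∧ ∀ x ≤ z, ∀ i ≤ 2,
    C⁻¹ ≤ Real.exp x / iteratedDeriv i ℓ x ∧ Real.exp x / iteratedDeriv i ℓ x ≤ C

/-- `C_ℓ(z)`: the least valid curvature constant at level `z`. -/
def Cconst (ℓ : ℝ → ℝ) (z : ℝ) : ℝ := sInf {C : ℝ | CBound ℓ z C}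

/-- Membership in the class `𝕃`: positive, twice continuously differentiable,
strictly convex, and `C_ℓ(z) < ∞` (i.e. some valid constant exists) for every `z`. -/
def MemL (ℓ : ℝ → ℝ) : Prop :=
  (∀ x, 0 < ℓ x) ∧ ContDiff ℝ 2 ℓ ∧ StrictConvexOn ℝ Set.univ ℓ ∧
    ∀ z : ℝ, ∃ C : ℝ, CBound ℓ z C

/-- Membership in `𝕃_∞`: in `𝕃` and moreover `C_ℓ(z) → 1` as `z → −∞`. -/
def MemLinf (ℓ : ℝ → ℝ) : Prop :=
  MemL ℓ ∧ Filter.Tendsto (Cconst ℓ) Filter.atBot (nhds 1)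

variable {m n : ℕ}

/-- The empirical risk `L(Aλ) = (1/m) Σᵢ ℓ((Aλ)ᵢ)`. -/
def LL (ℓ : ℝ → ℝ) (A : Matrix (Fin m) (Fin n) ℝ) (lam : Fin n → ℝ) : ℝ :=
  (∑ i, ℓ (A.mulVec lam i)) / m

/-- The gradient vector `∇L(Aλ)`, with `i`-th entry `ℓ'((Aλ)ᵢ)/m`. -/
def gradL (ℓ : ℝ → ℝ) (A : Matrix (Fin m) (Fin n) ℝ) (lam : Fin n → ℝ) : Fin m → ℝ :=
  fun i => deriv ℓ (A.mulVec lam i) / m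

/-- `‖Aᵀ ∇L(Aλ)‖_∞`. -/
def gInf (ℓ : ℝ → ℝ) (A : Matrix (Fin m) (Fin n) ℝ) (lam : Fin n → ℝ) : ℝ :=
  ⨆ j : Fin n, |∑ i, gradL ℓ A lam i * A i j|

/-- `‖∇L(Aλ)‖₁`. -/
def gOne (ℓ : ℝ → ℝ) (A : Matrix (Fin m) (Fin n) ℝ) (lam : Fin n → ℝ) : ℝ :=
  ∑ i, |gradL ℓ A lam i|

/-- `γ̂ = ‖Aᵀ∇L(Aλ)‖_∞ / ‖∇L(Aλ)‖₁`. -/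
def gammaHat (ℓ : ℝ → ℝ) (A : Matrix (Fin m) (Fin n) ℝ) (lam : Fin n → ℝ) : ℝ :=
  gInf ℓ A lam / gOne ℓ A lam

/-- `C = C_ℓ(ℓ⁻¹(m · L(Aλ)))`. -/
def Cstep (ℓ : ℝ → ℝ) (A : Matrix (Fin m) (Fin n) ℝ) (lam : Fin n → ℝ) : ℝ :=
  Cconst ℓ (Function.invFun ℓ ((m : ℝ) * LL ℓ A lam))

/-- The (minimum `l¹`) margin `M(Aλ) = min_k (−(Aλ)_k) / ‖λ‖₁`. -/
def margin (A : Matrix (Fin m) (Fin n) ℝ) (lam : Fin n → ℝ) : ℝ :=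
  ⨅ k : Fin m, (-(A.mulVec lam k)) / (∑ j, |lam j|)

/-- The maximum margin `γ = max_{‖λ‖₁=1} min_i (−(Aλ)ᵢ)`. -/
def gammaMax (A : Matrix (Fin m) (Fin n) ℝ) : ℝ :=
  sSup {r : ℝ | ∃ lam : Fin n → ℝ, (∑ j, |lam j|) = 1 ∧ r = ⨅ i : Fin m, -(A.mulVec lam i)}

/-- Boosting iterates: `λ₀ = 0`, `λ_t = λ_{t-1} + α_t • v_t` where `v_t` is a signed
standard basis vector satisfying `∇L(Aλ_{t-1})ᵀ A v_t = −‖Aᵀ∇L(Aλ_{t-1})‖_∞`. -/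
def IsBoostSeq (ℓ : ℝ → ℝ) (A : Matrix (Fin m) (Fin n) ℝ)
    (lam : ℕ → Fin n → ℝ) (α : ℕ → ℝ) (v : ℕ → Fin n → ℝ) : Prop :=
  lam 0 = 0 ∧
  (∀ t : ℕ, 1 ≤ t → lam t = lam (t-1) + α t • v t) ∧
  (∀ t : ℕ, 1 ≤ t → ∃ s : ℝ, (s = 1 ∨ s = -1) ∧ ∃ j : Fin n, v t = s • (Pi.single j (1:ℝ) : Fin n → ℝ)) ∧
  (∀ t : ℕ, 1 ≤ t →
    ∑ i, gradL ℓ A (lam (t-1)) i * A.mulVec (v t) i = - gInf ℓ A (lam (t-1)))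

/-- The quantity `Υ_ν(γ)`. -/
def Upsilon (ν γ : ℝ) : ℝ :=
  ((2/ν) * Real.log 2 - (2/ν) * Real.log ((1+γ) ^ (1-ν) + (1-γ) ^ (1-ν))
      - Real.log (1-γ^2)) /
    (Real.log (1+γ) - Real.log (1-γ))

/-!
Along a step `λ + a v`, `0 ≤ a ≤ α`, that decreases the risk, convexity keeps the risk below
`L(Aλ)`, so every coordinate stays in the region where `ℓ`, `ℓ'`, `ℓ''` agree with `exp` up to the
factor `C` and hence with one another up to `C²`. The second derivative of the risk along the step
is then at most `C² L(Aλ)`. If `v` descends at rate `G`, the curvature condition with parameter `c₂`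
forces `α ≥ (1 - c₂) G / (C² L(Aλ))`, and the sufficient decrease condition with parameter `c₁` then
lowers the risk by at least `c₁ (1 - c₂) G² / (C² L(Aλ))`. By `L(Aλ) ≤ C² ‖∇L(Aλ)‖₁` this is a
relative decrease of at least `c₁ (1 - c₂) C⁻⁶ (G / ‖∇L(Aλ)‖₁)²`; now use `1 - x ≤ exp (-x)` and
multiply over the steps. Here `c₁ = 1 - ν/2`, `c₂ = 1 - ν/4` and `G = ‖Aᵀ∇L(Aλ)‖_∞`.
-/

section RiskConvergence

open scoped Matrix

variable {ℓ : ℝ → ℝ} {A : Matrix (Fin m) (Fin n) ℝ}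

section CurvatureConstant

variable {z C x : ℝ} {i j : ℕ}

lemma CBound.pos (h : CBound ℓ z C) : 0 < C := zero_lt_one.trans_le h.1

lemma CBound.iteratedDeriv_pos (h : CBound ℓ z C) (hx : x ≤ z) (hi : i ≤ 2) :
    0 < iteratedDeriv i ℓ x :=
  (div_pos_iff_of_pos_left (Real.exp_pos x)).mp ((inv_pos.mpr h.pos).trans_le (h.2 x hx i hi).1)

lemma CBound.exp_le (h : CBound ℓ z C) (hx : x ≤ z) (hi : i ≤ 2) :
    Real.exp x ≤ C * iteratedDeriv i ℓ x :=
  (div_le_iff₀ (h.iteratedDeriv_pos hx hi)).mp (h.2 x hx i hi).2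

lemma CBound.iteratedDeriv_le_exp (h : CBound ℓ z C) (hx : x ≤ z) (hi : i ≤ 2) :
    iteratedDeriv i ℓ x ≤ C * Real.exp x :=
  (inv_mul_le_iff₀ h.pos).mp ((le_div_iff₀ (h.iteratedDeriv_pos hx hi)).mp (h.2 x hx i hi).1)

lemma CBound.iteratedDeriv_le_iteratedDeriv (h : CBound ℓ z C) (hx : x ≤ z) (hi : i ≤ 2)
    (hj : j ≤ 2) : iteratedDeriv i ℓ x ≤ C ^ 2 * iteratedDeriv j ℓ x :=
  calc iteratedDeriv i ℓ x ≤ C * Real.exp x := h.iteratedDeriv_le_exp hx hi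
    _ ≤ C * (C * iteratedDeriv j ℓ x) := mul_le_mul_of_nonneg_left (h.exp_le hx hj) h.pos.le
    _ = C ^ 2 * iteratedDeriv j ℓ x := by ring

lemma CBound.cconst (h : CBound ℓ z C) : CBound ℓ z (Cconst ℓ z) := by
  have hne : {C | CBound ℓ z C}.Nonempty := ⟨C, h⟩
  refine ⟨le_csInf hne fun _ hC ↦ hC.1, fun x hx i hi ↦ ⟨?_, ?_⟩⟩
  · have hratio : 0 < Real.exp x / iteratedDeriv i ℓ x :=
      div_pos (Real.exp_pos x) (h.iteratedDeriv_pos hx hi)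
    exact inv_le_of_inv_le₀ hratio <|
      le_csInf hne fun _ hC ↦ inv_le_of_inv_le₀ hC.pos (hC.2 x hx i hi).1
  · exact le_csInf hne fun _ hC ↦ (hC.2 x hx i hi).2

end CurvatureConstant

section Loss

lemma MemL.cBound_Cconst (hℓ : MemL ℓ) (z : ℝ) : CBound ℓ z (Cconst ℓ z) :=
  (hℓ.2.2.2 z).elim fun _ hC ↦ hC.cconst

lemma MemL.convexOn (hℓ : MemL ℓ) : ConvexOn ℝ Set.univ ℓ := hℓ.2.2.1.convexOn

lemma MemL.differentiable (hℓ : MemL ℓ) : Differentiable ℝ ℓ :=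
  hℓ.2.1.differentiable two_ne_zero

lemma MemL.hasDerivAt_deriv (hℓ : MemL ℓ) (x : ℝ) :
    HasDerivAt (deriv ℓ) (iteratedDeriv 2 ℓ x) x := by
  have hdiff : Differentiable ℝ (iteratedDeriv 1 ℓ) := hℓ.2.1.differentiable_iteratedDeriv' 1
  simpa only [iteratedDeriv_succ, iteratedDeriv_zero] using (hdiff x).hasDerivAt

lemma MemL.deriv_pos (hℓ : MemL ℓ) (x : ℝ) : 0 < deriv ℓ x := by
  simpa only [iteratedDeriv_one] using
    (hℓ.cBound_Cconst x).iteratedDeriv_pos le_rfl one_le_two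

lemma MemL.strictMono (hℓ : MemL ℓ) : StrictMono ℓ := strictMono_of_deriv_pos hℓ.deriv_pos

lemma MemL.tendsto_atBot (hℓ : MemL ℓ) : Filter.Tendsto ℓ Filter.atBot (nhds 0) := by
  have hexp : Filter.Tendsto (fun x ↦ Cconst ℓ 0 * Real.exp x) Filter.atBot (nhds 0) := by
    simpa only [mul_zero] using Real.tendsto_exp_atBot.const_mul (Cconst ℓ 0)
  refine squeeze_zero' (.of_forall fun x ↦ (hℓ.1 x).le) ?_ hexp
  filter_upwards [Filter.eventually_le_atBot 0] with x hx
  simpa only [iteratedDeriv_zero] using (hℓ.cBound_Cconst 0).iteratedDeriv_le_exp hx zero_le_two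

lemma MemL.tendsto_atTop (hℓ : MemL ℓ) : Filter.Tendsto ℓ Filter.atTop Filter.atTop := by
  have htangent : Filter.Tendsto (fun x ↦ ℓ 0 + deriv ℓ 0 * x) Filter.atTop Filter.atTop :=
    Filter.tendsto_atTop_add_const_left _ _ (Filter.tendsto_id.const_mul_atTop (hℓ.deriv_pos 0))
  refine Filter.tendsto_atTop_mono' _ ?_ htangent
  filter_upwards [Filter.eventually_gt_atTop 0] with x hx
  have hslope := hℓ.convexOn.deriv_le_slope (Set.mem_univ 0) (Set.mem_univ x) hx
    hℓ.differentiable.differentiableAt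
  rw [slope_def_field, sub_zero, le_div_iff₀ hx] at hslope
  linarith

lemma MemL.apply_invFun (hℓ : MemL ℓ) {y : ℝ} (hy : 0 < y) : ℓ (Function.invFun ℓ y) = y := by
  have hlow : ∃ x, ℓ x ≤ y := (hℓ.tendsto_atBot.eventually_le_const hy).exists
  have hhigh : ∃ x, y ≤ ℓ x := (hℓ.tendsto_atTop.eventually_ge_atTop y).exists
  exact Function.invFun_eq <|
    mem_range_of_exists_le_of_exists_ge hℓ.differentiable.continuous hlow hhigh

lemma MemL.le_invFun (hℓ : MemL ℓ) {x y : ℝ} (hxy : ℓ x ≤ y) : x ≤ Function.invFun ℓ y := by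
  rwa [← hℓ.strictMono.le_iff_le, hℓ.apply_invFun ((hℓ.1 x).trans_le hxy)]

end Loss

section Risk

variable {lam lam₀ v : Fin n → ℝ} {z C α : ℝ}

/-- The directional derivative `∇L(Aλ)ᵀ A v` of the risk at `λ` along `v`. -/
def dirDerivL (ℓ : ℝ → ℝ) (A : Matrix (Fin m) (Fin n) ℝ) (lam v : Fin n → ℝ) : ℝ :=
  ∑ k, gradL ℓ A lam k * (A *ᵥ v) k

/-- The second directional derivative of the risk at `λ` along `v`, that is, the Hessian of the risk
evaluated at `(v, v)`. -/
def hessL (ℓ : ℝ → ℝ) (A : Matrix (Fin m) (Fin n) ℝ) (lam v : Fin n → ℝ) : ℝ :=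
  (∑ k, iteratedDeriv 2 ℓ ((A *ᵥ lam) k) * (A *ᵥ v) k ^ 2) / m

lemma gInf_nonneg : 0 ≤ gInf ℓ A lam := Real.iSup_nonneg fun _ ↦ abs_nonneg _

lemma MemL.LL_pos (hℓ : MemL ℓ) (hm : 0 < m) : 0 < LL ℓ A lam :=
  have : Nonempty (Fin m) := ⟨⟨0, hm⟩⟩
  div_pos (Finset.sum_pos (fun _ _ ↦ hℓ.1 _) Finset.univ_nonempty) (Nat.cast_pos.mpr hm)

lemma MemL.apply_mulVec_le (hℓ : MemL ℓ) (k : Fin m) : ℓ ((A *ᵥ lam) k) ≤ m * LL ℓ A lam := by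
  have hm : (m : ℝ) ≠ 0 := Nat.cast_ne_zero.mpr k.pos.ne'
  rw [LL, mul_div_cancel₀ _ hm]
  exact Finset.single_le_sum (f := fun i ↦ ℓ ((A *ᵥ lam) i)) (fun _ _ ↦ (hℓ.1 _).le)
    (Finset.mem_univ k)

lemma MemL.mulVec_le_invFun (hℓ : MemL ℓ) (hlam : LL ℓ A lam ≤ LL ℓ A lam₀) (k : Fin m) :
    (A *ᵥ lam) k ≤ Function.invFun ℓ (m * LL ℓ A lam₀) :=
  hℓ.le_invFun <| (hℓ.apply_mulVec_le k).trans (mul_le_mul_of_nonneg_left hlam m.cast_nonneg)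

lemma convexOn_LL (hℓ : ConvexOn ℝ Set.univ ℓ) : ConvexOn ℝ Set.univ (LL ℓ A) := by
  refine ⟨convex_univ, fun x _ y _ a b ha hb hab ↦ ?_⟩
  have hcoord (k : Fin m) : ℓ ((A *ᵥ (a • x + b • y)) k) ≤
      a * ℓ ((A *ᵥ x) k) + b * ℓ ((A *ᵥ y) k) := by
    simpa [Matrix.mulVec_add, Matrix.mulVec_smul] using
      hℓ.2 (Set.mem_univ ((A *ᵥ x) k)) (Set.mem_univ ((A *ᵥ y) k)) ha hb hab
  calc LL ℓ A (a • x + b • y)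
      ≤ (∑ k, (a * ℓ ((A *ᵥ x) k) + b * ℓ ((A *ᵥ y) k))) / m :=
        div_le_div_of_nonneg_right (Finset.sum_le_sum fun k _ ↦ hcoord k) m.cast_nonneg
    _ = a • LL ℓ A x + b • LL ℓ A y := by
        simp only [LL, smul_eq_mul, Finset.sum_add_distrib, ← Finset.mul_sum, add_div,
          mul_div_assoc]

lemma LL_add_smul_le (hℓ : ConvexOn ℝ Set.univ ℓ) (hdec : LL ℓ A (lam + α • v) ≤ LL ℓ A lam)
    {a : ℝ} (ha : a ∈ Set.Icc 0 α) : LL ℓ A (lam + a • v) ≤ LL ℓ A lam := by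
  have hconv := (convexOn_LL (A := A) hℓ).comp_affineMap (AffineMap.lineMap lam (lam + v))
  have hmax := hconv.le_max_of_mem_Icc (Set.mem_univ 0) (Set.mem_univ α) ha
  simpa [AffineMap.lineMap_apply_module', add_comm, hdec] using hmax

lemma CBound.LL_le_gOne (h : CBound ℓ z C) (hz : ∀ k, (A *ᵥ lam) k ≤ z) :
    LL ℓ A lam ≤ C ^ 2 * gOne ℓ A lam := by
  rw [LL, gOne, Finset.mul_sum, Finset.sum_div]
  refine Finset.sum_le_sum fun k _ ↦ ?_
  have hcmp : ℓ ((A *ᵥ lam) k) ≤ C ^ 2 * deriv ℓ ((A *ᵥ lam) k) := by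
    simpa only [iteratedDeriv_zero, iteratedDeriv_one] using
      h.iteratedDeriv_le_iteratedDeriv (hz k) zero_le_two one_le_two
  calc ℓ ((A *ᵥ lam) k) / m ≤ C ^ 2 * deriv ℓ ((A *ᵥ lam) k) / m :=
        div_le_div_of_nonneg_right hcmp m.cast_nonneg
    _ = C ^ 2 * gradL ℓ A lam k := mul_div_assoc ..
    _ ≤ C ^ 2 * |gradL ℓ A lam k| := mul_le_mul_of_nonneg_left (le_abs_self _) (sq_nonneg C)

lemma CBound.hessL_le (h : CBound ℓ z C) (hz : ∀ k, (A *ᵥ lam) k ≤ z)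
    (hv : ∀ k, |(A *ᵥ v) k| ≤ 1) : hessL ℓ A lam v ≤ C ^ 2 * LL ℓ A lam := by
  rw [hessL, LL, ← mul_div_assoc, Finset.mul_sum]
  refine div_le_div_of_nonneg_right (Finset.sum_le_sum fun k _ ↦ ?_) m.cast_nonneg
  calc iteratedDeriv 2 ℓ ((A *ᵥ lam) k) * (A *ᵥ v) k ^ 2
      ≤ iteratedDeriv 2 ℓ ((A *ᵥ lam) k) :=
        mul_le_of_le_one_right (h.iteratedDeriv_pos (hz k) le_rfl).le
          ((sq_le_one_iff_abs_le_one _).mpr (hv k))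
    _ ≤ C ^ 2 * ℓ ((A *ᵥ lam) k) := by
        simpa only [iteratedDeriv_zero] using
          h.iteratedDeriv_le_iteratedDeriv (hz k) le_rfl zero_le_two

lemma MemL.hasDerivAt_dirDerivL (hℓ : MemL ℓ) (a : ℝ) :
    HasDerivAt (fun a : ℝ ↦ dirDerivL ℓ A (lam + a • v) v) (hessL ℓ A (lam + a • v) v) a := by
  have hline (k : Fin m) : HasDerivAt (fun a : ℝ ↦ (A *ᵥ (lam + a • v)) k) ((A *ᵥ v) k) a := by
    simpa [Matrix.mulVec_add, Matrix.mulVec_smul] using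
      ((hasDerivAt_id a).mul_const ((A *ᵥ v) k)).const_add ((A *ᵥ lam) k)
  have hterm (k : Fin m) : HasDerivAt (fun a : ℝ ↦ gradL ℓ A (lam + a • v) k * (A *ᵥ v) k)
      (iteratedDeriv 2 ℓ ((A *ᵥ (lam + a • v)) k) * (A *ᵥ v) k / m * (A *ᵥ v) k) a :=
    (((hℓ.hasDerivAt_deriv _).comp a (hline k)).div_const _).mul_const _
  refine (HasDerivAt.fun_sum fun k _ ↦ hterm k).congr_deriv ?_
  rw [hessL, Finset.sum_div]
  exact Finset.sum_congr rfl fun k _ ↦ by ring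

lemma MemL.dirDerivL_sub_le (hℓ : MemL ℓ) (hlam : LL ℓ A lam ≤ LL ℓ A lam₀)
    (hv : ∀ k, |(A *ᵥ v) k| ≤ 1) (hα : 0 ≤ α) (hdec : LL ℓ A (lam + α • v) ≤ LL ℓ A lam) :
    dirDerivL ℓ A (lam + α • v) v - dirDerivL ℓ A lam v ≤
      Cstep ℓ A lam₀ ^ 2 * LL ℓ A lam * α := by
  have hhess : ∀ a ∈ Set.Icc 0 α,
      hessL ℓ A (lam + a • v) v ≤ Cstep ℓ A lam₀ ^ 2 * LL ℓ A lam := fun a ha ↦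
    have hle : LL ℓ A (lam + a • v) ≤ LL ℓ A lam := LL_add_smul_le hℓ.convexOn hdec ha
    ((hℓ.cBound_Cconst _).hessL_le (hℓ.mulVec_le_invFun (hle.trans hlam)) hv).trans
      (mul_le_mul_of_nonneg_left hle (sq_nonneg _))
  have hmean := (convex_Icc 0 α).image_sub_le_mul_sub_of_deriv_le
    (fun a _ ↦ (hℓ.hasDerivAt_dirDerivL a).continuousAt.continuousWithinAt)
    (fun a _ ↦ (hℓ.hasDerivAt_dirDerivL a).differentiableAt.differentiableWithinAt)
    (fun a ha ↦ (hℓ.hasDerivAt_dirDerivL a).deriv.trans_le (hhess a (interior_subset ha)))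
    0 (Set.left_mem_Icc.mpr hα) α (Set.right_mem_Icc.mpr hα) hα
  simpa only [zero_smul, add_zero, sub_zero] using hmean

end Risk

section WolfeStep

variable {c₁ c₂ G α : ℝ} {lam lam₀ v : Fin n → ℝ}

/-- `α` is a Wolfe step for the risk from `λ` along `v`, with sufficient decrease parameter `c₁` and
curvature parameter `c₂`. Instead of the slope `-∇L(Aλ)ᵀ A v` the two conditions use a parameter
`G`, so that `v` need only be known to have at least this rate of descent. -/
def IsWolfeStep (ℓ : ℝ → ℝ) (A : Matrix (Fin m) (Fin n) ℝ) (c₁ c₂ G : ℝ) (lam v : Fin n → ℝ)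
    (α : ℝ) : Prop :=
  0 ≤ α ∧
  LL ℓ A (lam + α • v) ≤ LL ℓ A lam - α * c₁ * G ∧
  dirDerivL ℓ A (lam + α • v) v ≥ -c₂ * G

lemma IsWolfeStep.LL_le (h : IsWolfeStep ℓ A c₁ c₂ G lam v α) (hc₁ : 0 ≤ c₁) (hG : 0 ≤ G) :
    LL ℓ A (lam + α • v) ≤ LL ℓ A lam :=
  h.2.1.trans (sub_le_self _ (mul_nonneg (mul_nonneg h.1 hc₁) hG))

lemma IsWolfeStep.LL_le_sub_div {K : ℝ} (h : IsWolfeStep ℓ A c₁ c₂ G lam v α) (hc₁ : 0 ≤ c₁)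
    (hG : 0 ≤ G) (hdescent : dirDerivL ℓ A lam v ≤ -G) (hK : 0 < K)
    (hcurv : dirDerivL ℓ A (lam + α • v) v - dirDerivL ℓ A lam v ≤ K * α) :
    LL ℓ A (lam + α • v) ≤ LL ℓ A lam - c₁ * (1 - c₂) * G ^ 2 / K := by
  obtain ⟨-, hdec, hslope⟩ := h
  have hlong : (1 - c₂) * G / K ≤ α := (div_le_iff₀' hK).mpr (by linarith)
  calc LL ℓ A (lam + α • v) ≤ LL ℓ A lam - α * (c₁ * G) := by rwa [← mul_assoc]
    _ ≤ LL ℓ A lam - (1 - c₂) * G / K * (c₁ * G) :=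
        sub_le_sub_left (mul_le_mul_of_nonneg_right hlong (mul_nonneg hc₁ hG)) _
    _ = LL ℓ A lam - c₁ * (1 - c₂) * G ^ 2 / K := by ring

lemma mul_div_pow_six_mul_sq_le {L C c g : ℝ} (hL : 0 < L) (hC : 0 < C) (hc : 0 ≤ c)
    (hLg : L ≤ C ^ 2 * g) : L * (c / C ^ 6 * (G / g) ^ 2) ≤ c * G ^ 2 / (C ^ 2 * L) := by
  have hg : 0 < C ^ 2 * g := hL.trans_le hLg
  calc L * (c / C ^ 6 * (G / g) ^ 2) = c * G ^ 2 / (C ^ 2 * L) * (L / (C ^ 2 * g)) ^ 2 := by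
        field_simp
    _ ≤ c * G ^ 2 / (C ^ 2 * L) :=
        mul_le_of_le_one_right (by positivity)
          (pow_le_one₀ (div_nonneg hL.le hg.le) (div_le_one_of_le₀ hLg hg.le))

lemma IsWolfeStep.LL_le_mul_exp (h : IsWolfeStep ℓ A c₁ c₂ G lam v α) (hm : 0 < m) (hℓ : MemL ℓ)
    (hc₁ : 0 ≤ c₁) (hc₂ : c₂ ≤ 1) (hG : 0 ≤ G) (hdescent : dirDerivL ℓ A lam v ≤ -G)
    (hv : ∀ k, |(A *ᵥ v) k| ≤ 1) (hlam : LL ℓ A lam ≤ LL ℓ A lam₀) :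
    LL ℓ A (lam + α • v) ≤ LL ℓ A lam *
      Real.exp (-(c₁ * (1 - c₂) / Cstep ℓ A lam₀ ^ 6) * (G / gOne ℓ A lam) ^ 2) := by
  have hbound : CBound ℓ _ (Cstep ℓ A lam₀) := hℓ.cBound_Cconst _
  have hgOne := hbound.LL_le_gOne (hℓ.mulVec_le_invFun hlam)
  have hdec := h.LL_le_sub_div hc₁ hG hdescent
    (mul_pos (pow_pos hbound.pos 2) (hℓ.LL_pos hm))
    (hℓ.dirDerivL_sub_le hlam hv h.1 (h.LL_le hc₁ hG))
  have hrel := mul_div_pow_six_mul_sq_le (G := G) (hℓ.LL_pos hm) hbound.pos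
    (mul_nonneg hc₁ (sub_nonneg.mpr hc₂)) hgOne
  set E : ℝ := c₁ * (1 - c₂) / Cstep ℓ A lam₀ ^ 6 * (G / gOne ℓ A lam) ^ 2
  calc LL ℓ A (lam + α • v) ≤ LL ℓ A lam - LL ℓ A lam * E := hdec.trans (sub_le_sub_left hrel _)
    _ = LL ℓ A lam * (1 - E) := by ring
    _ ≤ LL ℓ A lam * Real.exp (-E) :=
        mul_le_mul_of_nonneg_left (Real.one_sub_le_exp_neg E) (hℓ.LL_pos hm).le
    _ = _ := by rw [neg_mul]

end WolfeStep

section Iterates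

lemma le_mul_exp_sum_Icc {f g : ℕ → ℝ} {t₀ t : ℕ} (ht : t₀ ≤ t)
    (hfg : ∀ s, t₀ ≤ s → f (s + 1) ≤ f s * Real.exp (g (s + 1))) :
    f t ≤ f t₀ * Real.exp (∑ i ∈ Finset.Icc (t₀ + 1) t, g i) := by
  induction t, ht using Nat.le_induction with
  | base => simp
  | succ s hs ih =>
    rw [Finset.sum_Icc_succ_top (by lia), Real.exp_add, ← mul_assoc]
    exact (hfg s hs).trans (mul_le_mul_of_nonneg_right ih (Real.exp_nonneg _))

lemma IsBoostSeq.abs_mulVec_le_one {lam v : ℕ → Fin n → ℝ} {α : ℕ → ℝ}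
    (hseq : IsBoostSeq ℓ A lam α v) (hA : ∀ i j, |A i j| ≤ 1) (i : ℕ) (hi : 1 ≤ i) (k : Fin m) :
    |(A *ᵥ v i) k| ≤ 1 := by
  obtain ⟨s, hs, j, hj⟩ := hseq.2.2.1 i hi
  rw [hj, Matrix.mulVec_smul]
  rcases hs with rfl | rfl <;> simpa using hA k j

theorem risk_conv_wolfe_general (hm : 0 < m) (hℓ : MemL ℓ) {c₁ c₂ : ℝ} (hc₁ : 0 ≤ c₁)
    (hc₂ : c₂ ≤ 1) {lam v : ℕ → Fin n → ℝ} {α G : ℕ → ℝ}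
    (hlam : ∀ i, 1 ≤ i → lam i = lam (i - 1) + α i • v i)
    (hv : ∀ i, 1 ≤ i → ∀ k, |(A *ᵥ v i) k| ≤ 1) (hG : ∀ i, 1 ≤ i → 0 ≤ G i)
    (hdescent : ∀ i, 1 ≤ i → dirDerivL ℓ A (lam (i - 1)) (v i) ≤ -G i)
    (hwolfe : ∀ i, 1 ≤ i → IsWolfeStep ℓ A c₁ c₂ (G i) (lam (i - 1)) (v i) (α i))
    {t₀ t : ℕ} (ht : t₀ ≤ t) :
    LL ℓ A (lam t) ≤ LL ℓ A (lam t₀) *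
      Real.exp (-(c₁ * (1 - c₂) / Cstep ℓ A (lam t₀) ^ 6) *
        ∑ i ∈ Finset.Icc (t₀ + 1) t, (G i / gOne ℓ A (lam (i - 1))) ^ 2) := by
  have hanti : Antitone fun s ↦ LL ℓ A (lam s) := antitone_nat_of_succ_le fun s ↦ by
    have hs := Nat.le_add_left 1 s
    rw [hlam (s + 1) hs]
    exact (hwolfe (s + 1) hs).LL_le hc₁ (hG (s + 1) hs)
  rw [Finset.mul_sum]
  refine le_mul_exp_sum_Icc (f := fun s ↦ LL ℓ A (lam s)) ht fun s hts ↦ ?_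
  have hs := Nat.le_add_left 1 s
  rw [hlam (s + 1) hs]
  exact (hwolfe (s + 1) hs).LL_le_mul_exp hm hℓ hc₁ hc₂ (hG (s + 1) hs) (hdescent (s + 1) hs)
    (hv (s + 1) hs) (hanti hts)

end Iterates

end RiskConvergence

/-- risk convergence for Wolfe steps. -/
theorem risk_conv_wolfe {m n : ℕ} (hm : 0 < m) (hn : 0 < n)
    (A : Matrix (Fin m) (Fin n) ℝ) (hA : ∀ i j, |A i j| ≤ 1)
    (ℓ : ℝ → ℝ) (hℓ : MemL ℓ)
    (ν : ℝ) (hν : ν ∈ Set.Ioc (0:ℝ) 1)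
    (lam : ℕ → Fin n → ℝ) (α : ℕ → ℝ) (v : ℕ → Fin n → ℝ)
    (hseq : IsBoostSeq ℓ A lam α v)
    (hwolfe : ∀ i : ℕ, 1 ≤ i →
      0 ≤ α i ∧
      LL ℓ A (lam (i-1) + α i • v i) ≤
        LL ℓ A (lam (i-1)) - α i * (1 - ν/2) * gInf ℓ A (lam (i-1)) ∧
      ∑ k, gradL ℓ A (lam (i-1) + α i • v i) k * A.mulVec (v i) k ≥
        -(1 - ν/4) * gInf ℓ A (lam (i-1)))
    (t₀ t : ℕ) (ht : t₀ < t) :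
    LL ℓ A (lam t) ≤ LL ℓ A (lam t₀) *
      Real.exp (-(ν * (2-ν) / (8 * (Cstep ℓ A (lam t₀))^6)) *
        ∑ i ∈ Finset.Icc (t₀+1) t, (gammaHat ℓ A (lam (i-1)))^2) := by
  rw [show ν * (2 - ν) / (8 * Cstep ℓ A (lam t₀) ^ 6) =
    (1 - ν / 2) * (1 - (1 - ν / 4)) / Cstep ℓ A (lam t₀) ^ 6 by ring]
  exact risk_conv_wolfe_general hm hℓ (by linarith [hν.2]) (by linarith [hν.1]) hseq.2.1
    (hseq.abs_mulVec_le_one hA) (fun _ _ ↦ gInf_nonneg) (fun i hi ↦ (hseq.2.2.2 i hi).le)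
    hwolfe ht.le
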